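/- Let κ be a field, r ≥ 1, s = (s₁,…,s_d) a sequence of nonnegative integers with s₁+⋯+s_d = r, w ∈ S_{r,s}, and u ∈ U_w. For p ∈ P_s and t ∈ T, one has p · a(w) · u · t⁻¹ = a(w) · u if and only if p = a(w) t a(w)⁻¹ and t u t⁻¹ = u; moreover, for t ∈ T with diagonal entries t₁,…,t_r, one has t u t⁻¹ = u if and only if t_i = t_j for every pair (i,j) with j < i, w(i) < w(j) and u_{ij} ≠ 0. Consequently the stabilizer of a(w)·u under the action (p,t)·(a(w)u) = p·a(w)·u·t⁻¹ of P_s × T is {(a(w) t a(w)⁻¹, t) : t ∈ T, t_i = t_j whenever u_{ij} ≠ 0 with j < i and w(i) < w(j)}. -/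

import Mathlib

/-!
Conjugating `p` by `a(w)` turns the stabilizer equation into `q * u = u * t` with
`q i j = p (w i) (w j)`. The matrix `q` is shown to be diagonal row by row
(`conj_offDiag_eq_zero`), by descending induction on the column `j`: as `u` is lower unitriangular,
the equation in position `(i, j)` reduces to `q i j + q i i * u i j = u i j * t j`. If `(i, j)` is
not an inversion of `w`, then `u i j = 0` and so `q i j = 0`. If it is an inversion, then `w i`
lies in a strictly earlier block than `w j`, since `w⁻¹` is increasing on each block, and
`q i j = 0` because `p` is block lower triangular (`memP_apply_eq_zero`). The diagonal of the
equation then gives `q = t`, that is `p = a(w) t a(w)⁻¹`, and `t u t⁻¹ = u`.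
-/

def blockStart {d : ℕ} (s : Fin d → ℕ) (b : Fin d) : ℕ :=
  ∑ j ∈ Finset.univ.filter (fun j => b < j), s j

def inBlock {d : ℕ} (s : Fin d → ℕ) (b : Fin d) (x : ℕ) : Prop :=
  blockStart s b ≤ x ∧ x < blockStart s b + s b

def sameBlock {d : ℕ} (s : Fin d → ℕ) (x y : ℕ) : Prop :=
  ∃ b, inBlock s b x ∧ inBlock s b y

/-- Membership in the parabolic subgroup `P_s ⊆ GL_r(κ)` of invertible block
lower triangular matrices for the block sizes `(s_d, …, s₁)` (top to bottom). -/
def memP {κ : Type} [Field κ] {d n : ℕ} (s : Fin d → ℕ)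
    (g : Matrix (Fin n) (Fin n) κ) : Prop :=
  IsUnit g ∧ ∀ b b' : Fin d, b' < b → ∀ i j : Fin n,
    inBlock s b i.val → inBlock s b' j.val → g i j = 0

/-- The permutation matrix `a(w)` with `a(w)_{ij} = δ_{i, w(j)}`. -/
def permMat (κ : Type) [Field κ] {r : ℕ} (w : Equiv.Perm (Fin r)) :
    Matrix (Fin r) (Fin r) κ :=
  Matrix.of fun i j => if i = w j then 1 else 0

/-- `w ∈ S_{r,s}`. -/
def memSrs {d r : ℕ} (s : Fin d → ℕ) (w : Equiv.Perm (Fin r)) : Prop :=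
  ∀ i j : Fin r, sameBlock s i.val j.val → i < j → w.symm i < w.symm j

/-- `u ∈ U_w`. -/
def memU {κ : Type} [Field κ] {r : ℕ} (w : Equiv.Perm (Fin r))
    (u : Matrix (Fin r) (Fin r) κ) : Prop :=
  (∀ i, u i i = 1) ∧ ∀ i j, i ≠ j → ¬(j < i ∧ w i < w j) → u i j = 0

/-- The diagonal matrix in `T ⊆ GL_r(κ)` with diagonal entries `t₁, …, t_r`. -/
def diagM {κ : Type} [Field κ] {r : ℕ} (t : Fin r → κˣ) :
    Matrix (Fin r) (Fin r) κ :=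
  Matrix.diagonal fun i => (t i : κ)

/-- The inverse `t⁻¹` of the diagonal matrix `diagM t`. -/
def diagInv {κ : Type} [Field κ] {r : ℕ} (t : Fin r → κˣ) :
    Matrix (Fin r) (Fin r) κ :=
  Matrix.diagonal fun i => ((t i)⁻¹ : κ)

/-- Blocks are numbered in reverse: a larger index means an earlier block. -/
lemma blockStart_add_le {d : ℕ} (s : Fin d → ℕ) {b b' : Fin d} (h : b' < b) :
    blockStart s b + s b ≤ blockStart s b' := by
  unfold blockStart
  rw [add_comm, ← Finset.sum_insert (s := Finset.univ.filter (fun j => b < j)) (by simp)]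
  apply Finset.sum_le_sum_of_subset
  intro j
  simp only [Finset.mem_insert, Finset.mem_filter, Finset.mem_univ, true_and]
  rintro (rfl | hj)
  · exact h
  · exact h.trans hj

/-- The blocks cover `{0, …, r - 1}`. -/
lemma exists_inBlock {d : ℕ} (s : Fin d → ℕ) {x : ℕ} (hx : x < ∑ b, s b) :
    ∃ b, inBlock s b x := by
  induction d with
  | zero => simp at hx
  | succ d ih =>
    have hsucc (b : Fin d) :
        blockStart s b.succ = blockStart (fun j : Fin d => s j.succ) b := by
      simp [blockStart, Finset.sum_filter, Fin.sum_univ_succ]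
    have hzero : blockStart s 0 = ∑ j : Fin d, s j.succ := by
      simp [blockStart, Finset.sum_filter, Fin.sum_univ_succ]
    rw [Fin.sum_univ_succ] at hx
    by_cases h : x < ∑ j : Fin d, s j.succ
    · obtain ⟨b, hb⟩ := ih (fun j => s j.succ) h
      refine ⟨b.succ, ?_⟩
      unfold inBlock at hb ⊢
      rwa [hsucc]
    · refine ⟨0, ?_⟩
      unfold inBlock
      omega

lemma permMat_mul_apply {κ : Type} [Field κ] {r : ℕ} (w : Equiv.Perm (Fin r))
    (M : Matrix (Fin r) (Fin r) κ) (i j : Fin r) :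
    (permMat κ w * M) (w i) j = M i j := by
  simp [Matrix.mul_apply, permMat]

lemma mul_permMat_apply {κ : Type} [Field κ] {r : ℕ} (w : Equiv.Perm (Fin r))
    (M : Matrix (Fin r) (Fin r) κ) (i j : Fin r) :
    (M * permMat κ w) i j = M i (w j) := by
  simp [Matrix.mul_apply, permMat]

lemma permMat_conj_apply {κ : Type} [Field κ] {r : ℕ} (w : Equiv.Perm (Fin r))
    (t : Fin r → κˣ) (i j : Fin r) :
    (permMat κ w * diagM t * permMat κ w⁻¹) (w i) (w j) = if i = j then (t i : κ) else 0 := by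
  rw [mul_permMat_apply, permMat_mul_apply]
  simp [diagM, Matrix.diagonal_apply]

lemma permMat_conj_eq {κ : Type} [Field κ] {r : ℕ} (w : Equiv.Perm (Fin r))
    (t : Fin r → κˣ) :
    permMat κ w * diagM t * permMat κ w⁻¹ = diagM (fun i => t (w.symm i)) := by
  ext i j
  obtain ⟨i, rfl⟩ := w.surjective i
  obtain ⟨j, rfl⟩ := w.surjective j
  rw [permMat_conj_apply]
  simp [diagM, Matrix.diagonal_apply]

lemma memP_diagM {κ : Type} [Field κ] {r d : ℕ} (s : Fin d → ℕ) (t : Fin r → κˣ) :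
    memP s (diagM t) := by
  refine ⟨?_, ?_⟩
  · rw [Matrix.isUnit_iff_isUnit_det, diagM, Matrix.det_diagonal, isUnit_iff_ne_zero]
    exact Finset.prod_ne_zero_iff.2 fun i _ => (t i).ne_zero
  · intro b b' hb i j hi hj
    have hlt := blockStart_add_le s hb
    unfold inBlock at hi hj
    refine Matrix.diagonal_apply_ne _ ?_
    rintro rfl
    omega

/-- At an inversion of `w ∈ S_{r,s}`, the entries `w i < w j` lie in different blocks, so block
lower triangular matrices vanish there. -/
lemma memP_apply_eq_zero {κ : Type} [Field κ] {r d : ℕ} {s : Fin d → ℕ} (hs : ∑ b, s b = r)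
    {w : Equiv.Perm (Fin r)} (hw : memSrs s w) {p : Matrix (Fin r) (Fin r) κ} (hp : memP s p)
    {i j : Fin r} (hji : j < i) (hij : w i < w j) : p (w i) (w j) = 0 := by
  obtain ⟨b, hb⟩ := exists_inBlock s (x := (w i).val) (by rw [hs]; exact (w i).isLt)
  obtain ⟨b', hb'⟩ := exists_inBlock s (x := (w j).val) (by rw [hs]; exact (w j).isLt)
  rcases lt_trichotomy b' b with h | rfl | h
  · exact hp.2 b b' h _ _ hb hb'
  · have := hw _ _ ⟨_, hb, hb'⟩ hij
    simp only [Equiv.symm_apply_apply] at this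
    exact absurd this hji.asymm
  · have hlt := blockStart_add_le s h
    unfold inBlock at hb hb'
    have : (w i).val < (w j).val := hij
    omega

/-- If `q * u = u * t` with `u ∈ U_w`, `t` diagonal and `q` zero at the inversions of `w`, then `q`
is diagonal. -/
lemma conj_offDiag_eq_zero {κ : Type} [Field κ] {r : ℕ} {w : Equiv.Perm (Fin r)}
    {u : Matrix (Fin r) (Fin r) κ} (hu : memU w u) {q : Fin r → Fin r → κ} {t : Fin r → κ}
    (hq : ∀ i j, j < i → w i < w j → q i j = 0)
    (h : ∀ i j, ∑ k, q i k * u k j = u i j * t j) (i j : Fin r) (hij : i ≠ j) : q i j = 0 := by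
  induction j using WellFoundedGT.induction with
  | ind j ih =>
    by_cases hR : j < i ∧ w i < w j
    · exact hq i j hR.1 hR.2
    · have huij : u i j = 0 := hu.2 i j hij hR
      have key := h i j
      rw [Finset.sum_eq_single j] at key
      · simpa [hu.1, huij] using key
      · intro k _ hkj
        by_cases hki : i = k
        · rw [← hki, huij, mul_zero]
        · by_cases hjk : j < k
          · rw [ih k hjk hki, zero_mul]
          · rw [hu.2 k j hkj (fun hh => hjk hh.1), mul_zero]
      · simp

lemma diag_conj_eq_iff {κ : Type} [Field κ] {r : ℕ} (u : Matrix (Fin r) (Fin r) κ)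
    (t : Fin r → κˣ) :
    diagM t * u * diagInv t = u ↔ ∀ i j, (t i : κ) * u i j = u i j * t j := by
  rw [← Matrix.ext_iff]
  simp only [diagM, diagInv, Matrix.mul_diagonal, Matrix.diagonal_mul]
  refine forall₂_congr fun i j => ?_
  rw [← div_eq_mul_inv, div_eq_iff (t j).ne_zero]

lemma stab_eq_iff {κ : Type} [Field κ] {r : ℕ} (w : Equiv.Perm (Fin r))
    (p u : Matrix (Fin r) (Fin r) κ) (t : Fin r → κˣ) :
    p * permMat κ w * u * diagInv t = permMat κ w * u ↔
      ∀ i j, ∑ k, p (w i) (w k) * u k j = u i j * t j := by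
  rw [← Matrix.ext_iff, w.surjective.forall]
  refine forall₂_congr fun i j => ?_
  rw [permMat_mul_apply, diagInv, Matrix.mul_diagonal, ← div_eq_mul_inv,
    div_eq_iff (t j).ne_zero, Matrix.mul_apply]
  simp only [mul_permMat_apply]

lemma stab_iff {κ : Type} [Field κ] {r d : ℕ} {s : Fin d → ℕ} (hs : ∑ b, s b = r)
    {w : Equiv.Perm (Fin r)} (hw : memSrs s w) {u : Matrix (Fin r) (Fin r) κ} (hu : memU w u)
    {p : Matrix (Fin r) (Fin r) κ} (hp : memP s p) (t : Fin r → κˣ) :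
    p * permMat κ w * u * diagInv t = permMat κ w * u ↔
      p = permMat κ w * diagM t * permMat κ w⁻¹ ∧ diagM t * u * diagInv t = u := by
  rw [stab_eq_iff, diag_conj_eq_iff]
  constructor
  · intro h
    have hoff := conj_offDiag_eq_zero hu (q := fun i j => p (w i) (w j)) (t := fun j => (t j : κ))
      (fun i j => memP_apply_eq_zero hs hw hp) h
    have hrow (i j : Fin r) : p (w i) (w i) * u i j = u i j * t j := by
      rw [← h i j, Finset.sum_eq_single i]
      · intro k _ hk
        have : p (w i) (w k) = 0 := hoff i k hk.symm
        rw [this, zero_mul]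
      · simp
    have hdiag (i : Fin r) : p (w i) (w i) = t i := by
      simpa [hu.1] using hrow i i
    refine ⟨?_, fun i j => by rw [← hdiag i, hrow]⟩
    ext i j
    obtain ⟨i, rfl⟩ := w.surjective i
    obtain ⟨j, rfl⟩ := w.surjective j
    rw [permMat_conj_apply]
    split_ifs with hij
    · rw [← hij, hdiag]
    · exact hoff i j hij
  · rintro ⟨rfl, h⟩ i j
    simp only [permMat_conj_apply]
    simpa using h i j

lemma centralize_iff {κ : Type} [Field κ] {r : ℕ} {w : Equiv.Perm (Fin r)}
    {u : Matrix (Fin r) (Fin r) κ} (hu : memU w u) (t : Fin r → κˣ) :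
    diagM t * u * diagInv t = u ↔
      ∀ i j : Fin r, j < i → w i < w j → u i j ≠ 0 → t i = t j := by
  rw [diag_conj_eq_iff]
  constructor
  · intro h i j _ _ hne
    have := h i j
    rw [mul_comm] at this
    exact Units.ext (mul_left_cancel₀ hne this)
  · intro h i j
    by_cases hij : i = j
    · rw [hij, mul_comm]
    · by_cases h0 : u i j = 0
      · simp [h0]
      · have hR : j < i ∧ w i < w j := by
          by_contra hR
          exact h0 (hu.2 i j hij hR)
        rw [h i j hR.1 hR.2 h0, mul_comm]

/-- Stabilizer of `a(w)·u` under the action `(p,t)·(a(w)u) = p·a(w)·u·t⁻¹`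
of `P_s × T`. -/
theorem stmt4 {κ : Type} [Field κ] {r d : ℕ} (hr : 0 < r)
    (s : Fin d → ℕ) (hs : ∑ b, s b = r)
    (w : Equiv.Perm (Fin r)) (hw : memSrs s w)
    (u : Matrix (Fin r) (Fin r) κ) (hu : memU w u) :
    (∀ p : Matrix (Fin r) (Fin r) κ, memP s p → ∀ t : Fin r → κˣ,
      (p * permMat κ w * u * diagInv t = permMat κ w * u ↔
        (p = permMat κ w * diagM t * permMat κ w⁻¹ ∧
          diagM t * u * diagInv t = u))) ∧
    (∀ t : Fin r → κˣ,
      (diagM t * u * diagInv t = u ↔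
        ∀ i j : Fin r, j < i → w i < w j → u i j ≠ 0 → t i = t j)) ∧
    ({pt : Matrix (Fin r) (Fin r) κ × (Fin r → κˣ) |
        memP s pt.1 ∧ pt.1 * permMat κ w * u * diagInv pt.2 = permMat κ w * u} =
      {pt : Matrix (Fin r) (Fin r) κ × (Fin r → κˣ) |
        (∀ i j : Fin r, j < i → w i < w j → u i j ≠ 0 → pt.2 i = pt.2 j) ∧
        pt.1 = permMat κ w * diagM pt.2 * permMat κ w⁻¹}) := by
  refine ⟨fun p hp t => stab_iff hs hw hu hp t, centralize_iff hu, ?_⟩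
  ext ⟨p, t⟩
  simp only [Set.mem_ofPred_eq]
  constructor
  · rintro ⟨hp, h⟩
    obtain ⟨h1, h2⟩ := (stab_iff hs hw hu hp t).1 h
    exact ⟨(centralize_iff hu t).1 h2, h1⟩
  · rintro ⟨h, hpt⟩
    have hp : memP s p := by
      rw [hpt, permMat_conj_eq]
      exact memP_diagM s _
    exact ⟨hp, (stab_iff hs hw hu hp t).2 ⟨hpt, (centralize_iff hu t).2 h⟩⟩
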